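/- One has φ(d) = φ'(w_{H*}) + φ(b), where d = d_μ = μw_J and b are the longest and shortest elements of the double coset W_J μ W_J. -/

import Mathlib

set_option synthInstance.maxHeartbeats 1000000
set_option maxHeartbeats 2000000

open scoped Classical

noncomputable section

namespace LY

/-! ## The coefficient field `ℚ(q)` -/

/-- The field `ℚ(q)` of rational functions. -/
abbrev K : Type := RatFunc ℚ

/-- The indeterminate `q`. -/
def qK : K := RatFunc.X

/-- The inclusion `ℤ[q] → ℚ(q)`. -/
def toK (p : Polynomial ℤ) : K := algebraMap (Polynomial ℚ) K (p.map (Int.castRingHom ℚ))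

/-- Evaluation of `p ∈ ℤ[q]` at `−q`, as an element of `ℚ(q)`; i.e. `p(−q)`. -/
def atNegQ (p : Polynomial ℤ) : K := Polynomial.eval₂ (Int.castRingHom K) (-qK) p

/-- The standard basis element `T_w` (resp. `a_w`) of the function model `W → ℚ(q)`
of the Hecke algebra (resp. of the Lusztig–Vogan module `M`). -/
def TT {W : Type} (w : W) : W → K := fun y => if y = w then 1 else 0

variable {B W : Type} [Group W] {M : CoxeterMatrix B}

/-- The Bruhat order on a Coxeter group: `u ≤ v` iff `v` is obtained from `u` by successive
right multiplications by reflections, each increasing the length. -/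
def BruhatLE (cs : CoxeterSystem M W) (u v : W) : Prop :=
  Relation.ReflTransGen
    (fun a b => cs.length a < cs.length b ∧ ∃ t, cs.IsReflection t ∧ b = a * t) u v

/-- Connectedness of the Coxeter diagram of `M`. -/
def DiagramConnected (M : CoxeterMatrix B) : Prop :=
  ∀ i j : B, Relation.ReflTransGen (fun a b => a ≠ b ∧ M a b ≠ 2) i j

/-- An automorphism of `W` preserving the set `S` of simple reflections, i.e. an element
of `A = Aut(W,S)`. -/
def IsDiagAut (cs : CoxeterSystem M W) (a : MulAut W) : Prop :=
  (⇑a) '' (Set.range cs.simple) = Set.range cs.simple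

/-! ## The affine setting -/

/-- All the data and axioms describing the setting: `(W,S)` is the Coxeter group of an
untwisted connected affine Dynkin diagram (an irreducible affine Weyl group); `Λ` is the
subgroup of translations (elements with finite conjugacy class), free abelian of finite
rank and of finite index; `s₀` is a hyperspecial vertex, `J = S − {s₀}`, `W_J` is the
finite subgroup generated by `J` with longest element `w_J`; `*` is the involution of `W`
given by `w* = w_J w w_J` on `W_J` and `λ* = −(ʷᴶλ)` on `Λ`; `pr` is the projection
`W → W_J` along `Λ`; `ρ` is the conjugation action of `W` on `Λ_ℚ ≅ ℚ^rank`
(via the identification `freeIso` of `Λ` with `ℤ^rank`). -/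
structure AffineData (cs : CoxeterSystem M W) where
  finB : Finite B
  conn : DiagramConnected M
  infW : Infinite W
  /-- the subgroup `Λ` of translations -/
  Lam : Subgroup W
  hLam_mem : ∀ w : W, w ∈ Lam ↔ {x : W | IsConj w x}.Finite
  hLam_normal : Lam.Normal
  hLam_comm : ∀ a ∈ Lam, ∀ b ∈ Lam, a * b = b * a
  hLam_index : Lam.FiniteIndex
  /-- `Λ` is free abelian of finite rank -/
  rank : ℕ
  freeIso : Lam ≃* Multiplicative (Fin rank → ℤ)
  /-- the hyperspecial vertex `s₀` -/
  s0 : W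
  hs0_S : s0 ∈ Set.range cs.simple
  /-- `s₀` is hyperspecial: the projection `W → W/Λ` restricts to an isomorphism from the
  subgroup generated by `S − {s₀}` onto `W/Λ`. -/
  hs0_hyper : ∀ w : W, ∃! u : W,
    u ∈ Subgroup.closure (Set.range cs.simple \ {s0}) ∧ w * u⁻¹ ∈ Lam
  hWJ_fin : (Subgroup.closure (Set.range cs.simple \ {s0}) : Set W).Finite
  /-- the longest element `w_J` of `W_J` -/
  wJ : W
  hwJ_mem : wJ ∈ Subgroup.closure (Set.range cs.simple \ {s0})
  hwJ_max : ∀ u ∈ Subgroup.closure (Set.range cs.simple \ {s0}), cs.length u ≤ cs.length wJ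
  /-- the involution `*` of `W` -/
  st : MulAut W
  hst_inv : ∀ w : W, st (st w) = w
  hst_J : ∀ u ∈ Subgroup.closure (Set.range cs.simple \ {s0}), st u = wJ * u * wJ
  hst_Lam : ∀ l ∈ Lam, st l = (wJ * l * wJ⁻¹)⁻¹
  hst_S : ∀ s ∈ Set.range cs.simple, st s ∈ Set.range cs.simple
  /-- lower Bruhat intervals are finite -/
  hBruhat_fin : ∀ w : W, {y : W | BruhatLE cs y w}.Finite
  /-- the projection `W → W_J` along `Λ` (`w ↦ w̄`) -/
  pr : W → W
  hpr : ∀ w : W, pr w ∈ Subgroup.closure (Set.range cs.simple \ {s0}) ∧ w * (pr w)⁻¹ ∈ Lam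
  /-- the conjugation action of `W` on `Λ_ℚ ≅ ℚ^rank` -/
  rho : W → ((Fin rank → ℚ) →ₗ[ℚ] (Fin rank → ℚ))
  hrho : ∀ (w : W) (l : Lam),
    rho w (fun i => ((Multiplicative.toAdd (freeIso l)) i : ℚ)) =
      fun i => ((Multiplicative.toAdd
        (freeIso ⟨w * (l : W) * w⁻¹, hLam_normal.conj_mem _ l.2 w⟩)) i : ℚ)

namespace AffineData

variable {cs : CoxeterSystem M W} (D : AffineData cs)

/-- The set `J = S − {s₀}`. -/
def Jset : Set W := Set.range cs.simple \ {D.s0}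

/-- The finite Weyl group `W_J`. -/
def WJ : Subgroup W := Subgroup.closure D.Jset

/-- `λ ∈ Λ` is a dominant translation (`λ ∈ Λ⁺`). -/
def IsDominant (l : W) : Prop :=
  l ∈ D.Lam ∧ cs.length (l * D.wJ) = cs.length l + cs.length D.wJ

/-- The embedding `Λ → Λ_ℚ = ℚ^rank`. -/
def iota (l : D.Lam) : Fin D.rank → ℚ :=
  fun i => ((Multiplicative.toAdd (D.freeIso l)) i : ℚ)

/-- `e(A)`: the dimension of the `(−1)`-eigenspace of a linear endomorphism `A` of `Λ_ℚ`. -/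
def eNeg (f : (Fin D.rank → ℚ) →ₗ[ℚ] (Fin D.rank → ℚ)) : ℕ :=
  Module.finrank ℚ (Module.End.eigenspace (f : Module.End ℚ (Fin D.rank → ℚ)) (-1))

/-- The map `A_u : λ ↦ ᵘ(λ*) = −(ᵘʷᴶλ)` on `Λ_ℚ`, for `u ∈ W_J`. -/
def Amap (u : W) : (Fin D.rank → ℚ) →ₗ[ℚ] (Fin D.rank → ℚ) := - D.rho (u * D.wJ)

/-- The invariant `φ(w) = e(A_{w̄}) − e(A_e)` for `w ∈ I_*`. -/
def phi (w : W) : ℤ := (D.eNeg (D.Amap (D.pr w)) : ℤ) - (D.eNeg (D.Amap 1) : ℤ)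

/-- The double coset `W_J x W_J`. -/
def DCoset (x : W) : Set W := {y : W | ∃ u ∈ D.WJ, ∃ v ∈ D.WJ, y = u * x * v}

/-- The set `H = J ∩ bJb⁻¹`. -/
def Hset (b : W) : Set W := D.Jset ∩ ((fun s => b * s * b⁻¹) '' D.Jset)

/-- The set `H* ⊆ J`, image of `H` under `*`. -/
def Hstar (b : W) : Set W := (⇑D.st) '' D.Hset b

/-- The subgroup `W_{H*}` generated by `H*`. -/
def WHstar (b : W) : Subgroup W := Subgroup.closure (D.Hstar b)

/-- The reflection representation `R'` of `W_{H*}`, as a subspace of `Λ_ℚ`: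
the span of the vectors `λ − ˢλ` for `λ ∈ Λ`, `s ∈ H*`. -/
def Rprime (b : W) : Submodule ℚ (Fin D.rank → ℚ) :=
  Submodule.span ℚ
    {v : Fin D.rank → ℚ | ∃ l : D.Lam, ∃ s ∈ D.Hstar b,
      v = D.iota l - D.iota ⟨s * (l : W) * s⁻¹, D.hLam_normal.conj_mem _ l.2 s⟩}

/-- `e'(A)`: the dimension of the `(−1)`-eigenspace of an endomorphism `A` of `R'`. -/
def eNeg' {b : W} (f : ↥(D.Rprime b) →ₗ[ℚ] ↥(D.Rprime b)) : ℕ :=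
  Module.finrank ℚ (Module.End.eigenspace (f : Module.End ℚ ↥(D.Rprime b)) (-1))

/-- `φ'(z) = e'(B_z) − e'(B_e)`, where `B_u : x ↦ −u·(w_{H*}·x)` on `R'`; here
`rho'` is the conjugation action of `W_{H*}` on `R'` and `wHs` is the longest element
of `W_{H*}`. -/
def phiP {b : W} (rho' : W → (↥(D.Rprime b) →ₗ[ℚ] ↥(D.Rprime b))) (wHs z : W) : ℤ :=
  (D.eNeg' (-(rho' (z * wHs))) : ℤ) - (D.eNeg' (-(rho' wHs)) : ℤ)

/-- Membership in `A_Λ ⊆ A = Aut(W,S)`: automorphisms acting on `Λ` as conjugation by some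
element of `W_J`. -/
def InALam (a : MulAut W) : Prop :=
  IsDiagAut cs a ∧ ∃ w ∈ D.WJ, ∀ l ∈ D.Lam, a l = w * l * w⁻¹

/-- Membership in the coset `A_Λ* = {a ∘ * : a ∈ A_Λ}`. -/
def InALamStar (c : MulAut W) : Prop := ∃ a : MulAut W, D.InALam a ∧ c = a * D.st

/-- The double coset `W_J x W_J^◇`, where `W_J^◇` is the subgroup generated by
`J^◇ = S − {s₁}`. -/
def DCosetDia (s1 : W) (x : W) : Set W :=
  {y : W | ∃ u ∈ D.WJ, ∃ v ∈ Subgroup.closure (Set.range cs.simple \ {s1}), y = u * x * v}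


end AffineData

/-! ## The Hecke algebra, the Lusztig–Vogan module, and the polynomials `P`, `P^σ` -/

/-- The Hecke algebra of `(W,S)` over `ℚ(q)` (modelled on functions `W → ℚ(q)`, with basis
`TT w = T_w`), together with its bar involution, and the Kazhdan–Lusztig polynomials
`P_{y,w} ∈ ℤ[q]` characterized by their defining properties. -/
structure HeckeData (cs : CoxeterSystem M W) where
  /-- the involution `q ↦ q⁻¹` of `ℚ(q)` -/
  barK : K →+* K
  hbarK_X : barK qK = qK⁻¹
  hbarK_inv : ∀ x, barK (barK x) = x
  /-- the multiplication of the Hecke algebra -/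
  mulH : (W → K) →ₗ[K] (W → K) →ₗ[K] (W → K)
  hmul_assoc : ∀ x y z : W → K, mulH (mulH x y) z = mulH x (mulH y z)
  hmul_one : ∀ x : W → K, mulH (TT 1) x = x ∧ mulH x (TT 1) = x
  hmul_TT : ∀ u v : W, cs.length (u * v) = cs.length u + cs.length v →
    mulH (TT u) (TT v) = TT (u * v)
  hmul_Ts : ∀ s ∈ Set.range cs.simple,
    mulH (TT s) (TT s) = (qK - 1) • TT s + qK • TT (1 : W)
  /-- the bar involution of the Hecke algebra: the ring involution with `q ↦ q⁻¹`,
  `T_w ↦ (T_{w⁻¹})⁻¹` -/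
  barH : (W → K) →+ (W → K)
  hbarH_inv : ∀ x, barH (barH x) = x
  hbarH_smul : ∀ (c : K) (x : W → K), barH (c • x) = barK c • barH x
  hbarH_mul : ∀ x y : W → K, barH (mulH x y) = mulH (barH x) (barH y)
  hbarH_T : ∀ w : W, mulH (barH (TT w)) (TT w⁻¹) = TT (1 : W) ∧
    mulH (TT w⁻¹) (barH (TT w)) = TT (1 : W)
  /-- the Kazhdan–Lusztig polynomials `P_{y,w}` -/
  P : W → W → Polynomial ℤ
  hP_supp : ∀ y w : W, ¬ BruhatLE cs y w → P y w = 0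
  hP_diag : ∀ w : W, P w w = 1
  hP_deg : ∀ y w : W, BruhatLE cs y w → y ≠ w →
    2 * (P y w).natDegree + 1 ≤ cs.length w - cs.length y
  hP_dual : ∀ w : W,
    (qK ^ cs.length w) • barH (fun y => if BruhatLE cs y w then toK (P y w) else 0)
      = fun y => if BruhatLE cs y w then toK (P y w) else 0

/-- The Lusztig–Vogan module `M` over the Hecke algebra `H'` with parameter `q²`, attached to
a length-preserving involutive automorphism `star` of `(W,S)`, together with its bar
involution, and the polynomials `P^σ_{y,w} ∈ ℤ[q]` (for `y, w ∈ I_*`) characterized by their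
defining properties.  Both `H'` and `M` are modelled on functions `W → ℚ(q)`; the basis
element `a_w` of `M` (for `w ∈ I_*`) is `TT w`. -/
structure LVData (cs : CoxeterSystem M W) (star : MulAut W) where
  /-- the involution `q ↦ q⁻¹` of `ℚ(q)` -/
  barK : K →+* K
  hbarK_X : barK qK = qK⁻¹
  hbarK_inv : ∀ x, barK (barK x) = x
  /-- the multiplication of the Hecke algebra `H'` with parameter `q²` -/
  mulH' : (W → K) →ₗ[K] (W → K) →ₗ[K] (W → K)
  hmul'_assoc : ∀ x y z : W → K, mulH' (mulH' x y) z = mulH' x (mulH' y z)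
  hmul'_one : ∀ x : W → K, mulH' (TT 1) x = x ∧ mulH' x (TT 1) = x
  hmul'_TT : ∀ u v : W, cs.length (u * v) = cs.length u + cs.length v →
    mulH' (TT u) (TT v) = TT (u * v)
  hmul'_Ts : ∀ s ∈ Set.range cs.simple,
    mulH' (TT s) (TT s) = (qK ^ 2 - 1) • TT s + (qK ^ 2) • TT (1 : W)
  /-- the bar involution of `H'` -/
  barH' : (W → K) →+ (W → K)
  hbarH'_inv : ∀ x, barH' (barH' x) = x
  hbarH'_smul : ∀ (c : K) (x : W → K), barH' (c • x) = barK c • barH' x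
  hbarH'_mul : ∀ x y : W → K, barH' (mulH' x y) = mulH' (barH' x) (barH' y)
  hbarH'_T : ∀ w : W, mulH' (barH' (TT w)) (TT w⁻¹) = TT (1 : W) ∧
    mulH' (TT w⁻¹) (barH' (TT w)) = TT (1 : W)
  /-- the action of `H'` on the module `M` -/
  actM : (W → K) →ₗ[K] (W → K) →ₗ[K] (W → K)
  hact_one : ∀ m : W → K, actM (TT 1) m = m
  hact_mul : ∀ (h h' : W → K) (m : W → K), actM (mulH' h h') m = actM h (actM h' m)
  hact1 : ∀ s ∈ Set.range cs.simple, ∀ w : W, star w = w⁻¹ →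
    s * w = w * star s → cs.length w < cs.length (s * w) →
    actM (TT s) (TT w) = qK • TT w + (qK + 1) • TT (s * w)
  hact2 : ∀ s ∈ Set.range cs.simple, ∀ w : W, star w = w⁻¹ →
    s * w = w * star s → cs.length (s * w) < cs.length w →
    actM (TT s) (TT w) = (qK ^ 2 - qK - 1) • TT w + (qK ^ 2 - qK) • TT (s * w)
  hact3 : ∀ s ∈ Set.range cs.simple, ∀ w : W, star w = w⁻¹ →
    s * w ≠ w * star s → cs.length w < cs.length (s * w) →
    actM (TT s) (TT w) = TT (s * w * star s)
  hact4 : ∀ s ∈ Set.range cs.simple, ∀ w : W, star w = w⁻¹ →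
    s * w ≠ w * star s → cs.length (s * w) < cs.length w →
    actM (TT s) (TT w) = (qK ^ 2 - 1) • TT w + (qK ^ 2) • TT (s * w * star s)
  /-- the bar involution of the module `M` -/
  barM : (W → K) →+ (W → K)
  hbarM_inv : ∀ m : W → K, barM (barM m) = m
  hbarM_smul : ∀ (c : K) (m : W → K), barM (c • m) = barK c • barM m
  hbarM_act : ∀ (h m : W → K), barM (actM h m) = actM (barH' h) (barM m)
  hbarM_one : barM (TT 1) = TT (1 : W)
  /-- the Lusztig–Vogan polynomials `P^σ_{y,w}` -/
  Psig : W → W → Polynomial ℤ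
  hPsig_supp : ∀ y w : W, ¬ (BruhatLE cs y w ∧ star y = y⁻¹) → Psig y w = 0
  hPsig_diag : ∀ w : W, star w = w⁻¹ → Psig w w = 1
  hPsig_deg : ∀ y w : W, star w = w⁻¹ → star y = y⁻¹ → BruhatLE cs y w → y ≠ w →
    2 * (Psig y w).natDegree + 1 ≤ cs.length w - cs.length y
  hPsig_dual : ∀ w : W, star w = w⁻¹ →
    (qK ^ (2 * cs.length w)) •
        barM (fun y => if BruhatLE cs y w ∧ star y = y⁻¹ then toK (Psig y w) else 0)
      = fun y => if BruhatLE cs y w ∧ star y = y⁻¹ then toK (Psig y w) else 0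

/-! ## The `Z`-polynomials -/

/-- `Z_w(q) = Σ_{y ≤ w} P_{y,w}(q) q^{ℓ(y)}`. -/
def Zpoly (cs : CoxeterSystem M W) (HD : HeckeData cs) (w : W) : K :=
  ∑ᶠ y : W, if BruhatLE cs y w then toK (HD.P y w) * qK ^ cs.length y else 0

/-- `Z_w(−q) = Σ_{y ≤ w} P_{y,w}(−q) (−q)^{ℓ(y)}`. -/
def ZpolyNeg (cs : CoxeterSystem M W) (HD : HeckeData cs) (w : W) : K :=
  ∑ᶠ y : W, if BruhatLE cs y w then atNegQ (HD.P y w) * (-qK) ^ cs.length y else 0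

/-- `Z^σ_w(q) = Σ_{y ≤ w, y ∈ I_*} P^σ_{y,w}(q) q^{ℓ(y)} ((q−1)/(q+1))^{φ(y)}`. -/
def Zsig (cs : CoxeterSystem M W) (D : AffineData cs) (LD : LVData cs D.st) (w : W) : K :=
  ∑ᶠ y : W, if BruhatLE cs y w ∧ D.st y = y⁻¹ then
    toK (LD.Psig y w) * qK ^ cs.length y * ((qK - 1) / (qK + 1)) ^ D.phi y else 0

/-!
Every `w` is determined by its set `N(w)` of left inversions, and `N(xy)` is the symmetric
difference of `N(x)` and `x N(y) x⁻¹`. Since `W_H = W_J ∩ b W_J b⁻¹`, comparing inversion sets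
within `W_J` gives `d = w_J w_H b w_J`, that is, `b = w_H w_J μ`. Hence `d` and `b` project to `w_J`
and `w_H w_J`, and `φ(d) - φ(b)` is the codimension of the fixed space of `w_H` on `Λ_ℚ`. As
`w_H = (w_{H*})*` is conjugate to `w_{H*}`, this is the codimension of the fixed space of the
involution `w_{H*}`, which displaces vectors only by elements of `R'`, so it may be computed inside
`R'`, where it is `φ'(w_{H*})`.
-/

section Inversions

variable {B W : Type*} [Group W] {M : CoxeterMatrix B} (cs : CoxeterSystem M W)

/-- The conjugation action of `W` on the functions `W → ℤ/2`, written multiplicatively so that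
it can be used to form a semidirect product. -/
def conjArrow (W : Type*) [Group W] : W →* MulAut (W → Multiplicative (ZMod 2)) :=
  mulAutArrow.comp ConjAct.toConjAct.toMonoidHom

lemma conjArrow_apply (w : W) (F : W → Multiplicative (ZMod 2)) (t : W) :
    conjArrow W w F t = F (w⁻¹ * t * w) := by
  change F ((ConjAct.toConjAct w)⁻¹ • t) = _
  rw [← ConjAct.toConjAct_inv, ConjAct.toConjAct_smul, inv_inv]

/-- The image of the simple reflection `s i` under the lift `w ↦ (N(w), w)` of the inversion set
to a homomorphism into a semidirect product: the indicator function of `s i`, paired with `s i`. -/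
def simpleLift (i : B) : (W → Multiplicative (ZMod 2)) ⋊[conjArrow W] W :=
  ⟨Pi.mulSingle (cs.simple i) (Multiplicative.ofAdd 1), cs.simple i⟩

lemma prod_map_simpleLift (ω : List B) :
    (ω.map (simpleLift cs)).prod =
      ⟨fun t => Multiplicative.ofAdd ((cs.leftInvSeq ω).count t : ZMod 2), cs.wordProd ω⟩ := by
  induction ω with
  | nil => ext <;> simp
  | cons i ω ih =>
    rw [List.map_cons, List.prod_cons, ih]
    ext t
    · have hcount : ((cs.leftInvSeq ω).map (MulAut.conj (cs.simple i))).count t =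
          (cs.leftInvSeq ω).count ((cs.simple i)⁻¹ * t * cs.simple i) := by
        rw [← List.count_map_of_injective (cs.leftInvSeq ω) _ (MulAut.conj (cs.simple i)).injective,
          MulAut.conj_apply]
        group
      simp only [SemidirectProduct.mul_left, Pi.mul_apply, simpleLift, conjArrow_apply,
        CoxeterSystem.leftInvSeq, List.count_cons, hcount, Pi.mulSingle_apply, beq_iff_eq,
        eq_comm (a := t)]
      split_ifs <;> simp [← ofAdd_add, add_comm]
    · simp [simpleLift, cs.wordProd_cons]

lemma prod_map_alternatingWord_two_mul {G : Type*} [Monoid G] (f : B → G) (i j : B) (p : ℕ) :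
    ((CoxeterSystem.alternatingWord i j (2 * p)).map f).prod = (f i * f j) ^ p := by
  induction p with
  | zero => simp [CoxeterSystem.alternatingWord]
  | succ p ih =>
    rw [mul_add_one, CoxeterSystem.alternatingWord_succ', CoxeterSystem.alternatingWord_succ',
      if_neg (by simp), if_pos (by simp), List.map_cons, List.map_cons, List.prod_cons,
      List.prod_cons, ih, pow_succ', mul_assoc]

lemma leftInvSeq_alternatingWord_eq_append_self (i j : B) :
    ∃ L, cs.leftInvSeq (CoxeterSystem.alternatingWord i j (2 * M i j)) = L ++ L := by
  set A := CoxeterSystem.alternatingWord i j (2 * M i j)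
  have hlen : (cs.leftInvSeq A).length = 2 * M i j := by simp [A]
  have hperiod : (cs.leftInvSeq A).drop (M i j) = (cs.leftInvSeq A).take (M i j) := by
    refine List.ext_getElem (by simp [hlen]; omega) fun k hk _ => ?_
    have hkM : k < M i j := by simp [hlen] at hk; omega
    rw [List.getElem_drop, List.getElem_take,
      cs.getElem_leftInvSeq_alternatingWord i j _ _ (by omega),
      cs.getElem_leftInvSeq_alternatingWord i j _ _ (by omega),
      cs.prod_alternatingWord_eq_mul_pow, cs.prod_alternatingWord_eq_mul_pow,
      show (2 * (M i j + k) + 1) / 2 = M i j + k by omega, show (2 * k + 1) / 2 = k by omega,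
      pow_add, M.symmetric i j, cs.simple_mul_simple_pow, one_mul]
    simp
  exact ⟨(cs.leftInvSeq A).take (M i j), by
    conv_lhs => rw [← List.take_append_drop (M i j) (cs.leftInvSeq A), hperiod]⟩

lemma isLiftable_simpleLift : M.IsLiftable (simpleLift cs) := by
  intro i j
  obtain ⟨L, hL⟩ := leftInvSeq_alternatingWord_eq_append_self cs i j
  rw [← prod_map_alternatingWord_two_mul, prod_map_simpleLift, hL]
  ext t
  · simp [CharTwo.add_self_eq_zero]
  · simp [cs.prod_alternatingWord_eq_mul_pow]

/-- The parity of the number of times `t` occurs in the left inversion sequence of a word for `w`;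
it does not depend on the word, and for reflections `t` it detects left inversions. -/
def inversionParity (w t : W) : ZMod 2 :=
  Multiplicative.toAdd ((cs.lift ⟨simpleLift cs, isLiftable_simpleLift cs⟩ w).left t)

lemma lift_simpleLift_wordProd (ω : List B) :
    cs.lift ⟨simpleLift cs, isLiftable_simpleLift cs⟩ (cs.wordProd ω) =
      (ω.map (simpleLift cs)).prod := by
  rw [CoxeterSystem.wordProd, map_list_prod, List.map_map]
  congr 2
  ext1 i
  exact cs.lift_apply_simple (isLiftable_simpleLift cs) i

lemma inversionParity_wordProd (ω : List B) (t : W) :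
    inversionParity cs (cs.wordProd ω) t = (cs.leftInvSeq ω).count t := by
  rw [inversionParity, lift_simpleLift_wordProd, prod_map_simpleLift, toAdd_ofAdd]

lemma inversionParity_mul (x y t : W) :
    inversionParity cs (x * y) t = inversionParity cs x t + inversionParity cs y (x⁻¹ * t * x) := by
  have hright : (cs.lift ⟨simpleLift cs, isLiftable_simpleLift cs⟩ x).right = x := by
    obtain ⟨ω, rfl⟩ := cs.wordProd_surjective x
    rw [lift_simpleLift_wordProd, prod_map_simpleLift]
  rw [inversionParity, map_mul, SemidirectProduct.mul_left, hright, Pi.mul_apply, conjArrow_apply,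
    toAdd_mul]
  rfl

lemma inversionParity_one (t : W) : inversionParity cs 1 t = 0 := by
  simpa using inversionParity_wordProd cs [] t

lemma inversionParity_self {t : W} (ht : cs.IsReflection t) : inversionParity cs t t = 1 := by
  obtain ⟨w, i, rfl⟩ := ht
  have hone := inversionParity_mul cs w w⁻¹ (w * cs.simple i * w⁻¹)
  have hsimple : inversionParity cs (cs.simple i) (cs.simple i) = 1 := by
    simpa using inversionParity_wordProd cs [i] (cs.simple i)
  rw [mul_inv_cancel, inversionParity_one] at hone
  rw [inversionParity_mul, inversionParity_mul]
  simp only [mul_assoc, mul_inv_rev, inv_mul_cancel_left, inv_mul_cancel, mul_one,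
    cs.inv_simple, hsimple, cs.simple_mul_simple_self] at hone ⊢
  rw [add_right_comm, ← hone, zero_add]

lemma isLeftInversion_iff_inversionParity {w t : W} (ht : cs.IsReflection t) :
    cs.IsLeftInversion w t ↔ inversionParity cs w t = 1 := by
  have of_parity : ∀ {x : W}, inversionParity cs x t = 1 → cs.IsLeftInversion x t := by
    intro x hx
    obtain ⟨ω, hω, rfl⟩ := cs.exists_isReduced x
    refine cs.isLeftInversion_of_mem_leftInvSeq hω ?_
    by_contra hmem
    simp [inversionParity_wordProd, List.count_eq_zero_of_not_mem hmem] at hx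
  refine ⟨fun h => ?_, of_parity⟩
  by_contra hne
  have hzero : inversionParity cs w t = 0 := (Fin.exists_fin_two.1 ⟨_, rfl⟩).resolve_right hne
  refine ht.isLeftInversion_mul_right_iff.1 (of_parity ?_) h
  rw [inversionParity_mul, inversionParity_self cs ht]
  simp [hzero]

lemma isLeftInversion_mul_iff {x y t : W} :
    cs.IsLeftInversion (x * y) t ↔
      Xor (cs.IsLeftInversion x t) (cs.IsLeftInversion y (x⁻¹ * t * x)) := by
  by_cases ht : cs.IsReflection t
  · have ht' : cs.IsReflection (x⁻¹ * t * x) := by simpa using ht.conj x⁻¹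
    rw [isLeftInversion_iff_inversionParity cs ht, isLeftInversion_iff_inversionParity cs ht,
      isLeftInversion_iff_inversionParity cs ht', inversionParity_mul]
    generalize inversionParity cs x t = p
    generalize inversionParity cs y (x⁻¹ * t * x) = q
    revert p q
    decide
  · have ht' : ¬ cs.IsReflection (x⁻¹ * t * x) := fun h => ht (by
      simpa [mul_assoc] using h.conj x)
    simp only [CoxeterSystem.IsLeftInversion, ht, ht', false_and, xor_self]

lemma not_isLeftInversion_one (t : W) : ¬ cs.IsLeftInversion 1 t :=
  fun h => by simpa using h.2

lemma isLeftInversion_simple_iff {i : B} {t : W} :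
    cs.IsLeftInversion (cs.simple i) t ↔ t = cs.simple i := by
  refine ⟨fun h => ?_, ?_⟩
  · have hlen := h.2
    rw [cs.length_simple, Nat.lt_one_iff, cs.length_eq_zero_iff] at hlen
    rw [eq_inv_of_mul_eq_one_left hlen, cs.inv_simple]
  · rintro rfl
    exact ⟨cs.isReflection_simple i, by simp⟩

lemma exists_isLeftInversion_simple {w : W} (hw : w ≠ 1) :
    ∃ i, cs.IsLeftInversion w (cs.simple i) := by
  obtain ⟨i, hi⟩ := cs.exists_leftDescent_of_ne_one hw
  exact ⟨i, (cs.isLeftInversion_simple_iff_isLeftDescent w i).2 hi⟩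

lemma eq_of_forall_isLeftInversion_iff {x y : W}
    (h : ∀ t, cs.IsLeftInversion x t ↔ cs.IsLeftInversion y t) : x = y := by
  by_contra hxy
  obtain ⟨i, hi⟩ := exists_isLeftInversion_simple cs (w := x⁻¹ * y)
    (fun h1 => hxy (inv_mul_eq_one.1 h1))
  have hmul := isLeftInversion_mul_iff cs (x := x) (y := x⁻¹ * y) (t := x * cs.simple i * x⁻¹)
  rw [mul_inv_cancel_left, ← h, show x⁻¹ * (x * cs.simple i * x⁻¹) * x = cs.simple i by group,
    xor_iff_not_iff] at hmul
  tauto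

lemma conj_mem_iff {G : Type*} [Group G] {P : Subgroup G} {x : G} (hx : x ∈ P) (t : G) :
    x⁻¹ * t * x ∈ P ↔ t ∈ P := by
  rw [P.mul_mem_cancel_right hx, P.mul_mem_cancel_left (inv_mem hx)]

lemma isReflection_conj_iff' (x t : W) : cs.IsReflection (x⁻¹ * t * x) ↔ cs.IsReflection t := by
  simpa using cs.isReflection_conj_iff x⁻¹ t

lemma mem_closure_of_forall_isLeftInversion_mem {Q : Subgroup W} {g : W}
    (h : ∀ t, cs.IsLeftInversion g t → t ∈ Q) :
    g ∈ Subgroup.closure ((Q : Set W) ∩ Set.range cs.simple) := by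
  induction hn : cs.length g using Nat.strong_induction_on generalizing g with
  | _ n ih =>
    by_cases hg : g = 1
    · exact hg ▸ one_mem _
    obtain ⟨i, hi⟩ := exists_isLeftInversion_simple cs hg
    have hiQ := h _ hi
    have hrest : cs.simple i * g ∈ Subgroup.closure ((Q : Set W) ∩ Set.range cs.simple) := by
      refine ih _ (hn ▸ hi.2) (fun t ht => ?_) rfl
      rw [isLeftInversion_mul_iff, isLeftInversion_simple_iff] at ht
      obtain ⟨rfl, -⟩ | ⟨ht, -⟩ := ht
      · exact hiQ
      · exact (conj_mem_iff hiQ t).1 (h _ ht)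
    have hsimple : cs.simple i ∈ Subgroup.closure ((Q : Set W) ∩ Set.range cs.simple) :=
      Subgroup.subset_closure ⟨hiQ, i, rfl⟩
    simpa using mul_mem hsimple hrest

/-- Standard parabolic subgroups: those generated by a set of simple reflections. -/
def IsStandardParabolic (P : Subgroup W) : Prop :=
  ∃ J ⊆ Set.range cs.simple, Subgroup.closure J = P

/-- `w` is the longest element of `P`: its left inversions are exactly the reflections in `P`. -/
def IsLongest (P : Subgroup W) (w : W) : Prop :=
  ∀ t, cs.IsLeftInversion w t ↔ cs.IsReflection t ∧ t ∈ P

/-- `b` has minimal length in the coset `P b`: no reflection in `P` is a left inversion of `b`. -/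
def IsLeftMinimal (P : Subgroup W) (b : W) : Prop :=
  ∀ t ∈ P, ¬ cs.IsLeftInversion b t

/-- `d` has maximal length in the coset `P d`: all reflections in `P` are left inversions of `d`. -/
def IsLeftMaximal (P : Subgroup W) (d : W) : Prop :=
  ∀ t ∈ P, cs.IsReflection t → cs.IsLeftInversion d t

/-- The intersection `P ∩ b P b⁻¹`; for `P = W_J` and `b` of minimal length in its double coset
this is the parabolic subgroup `W_H`. -/
def interConj (P : Subgroup W) (b : W) : Subgroup W :=
  P ⊓ P.map (MulAut.conj b).toMonoidHom

lemma mem_interConj {P : Subgroup W} {b x : W} :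
    x ∈ interConj P b ↔ x ∈ P ∧ b⁻¹ * x * b ∈ P := by
  rw [interConj, Subgroup.mem_inf]
  exact and_congr_right fun _ => by
    simpa using Subgroup.mem_map_equiv (f := MulAut.conj b) (K := P) (x := x)

variable {cs} {P : Subgroup W}

lemma IsStandardParabolic.mem_of_isLeftInversion (hP : IsStandardParabolic cs P) {v t : W}
    (hv : v ∈ P) (ht : cs.IsLeftInversion v t) : t ∈ P := by
  obtain ⟨J, hJ, rfl⟩ := hP
  induction hv using Subgroup.closure_induction generalizing t with
  | mem s hs =>
    obtain ⟨i, rfl⟩ := hJ hs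
    rw [(isLeftInversion_simple_iff cs).1 ht]
    exact Subgroup.subset_closure hs
  | one => exact absurd ht (not_isLeftInversion_one cs t)
  | mul x y hx _ ihx ihy =>
    rcases (isLeftInversion_mul_iff cs).1 ht with ⟨ht, -⟩ | ⟨ht, -⟩
    · exact ihx ht
    · exact (conj_mem_iff hx t).1 (ihy ht)
  | inv x hx ih =>
    have hmul := isLeftInversion_mul_iff cs (x := x⁻¹) (y := x) (t := t)
    simp only [inv_mul_cancel, not_isLeftInversion_one, ht, xor_true, false_iff, not_not] at hmul
    exact (conj_mem_iff (inv_mem hx) t).1 (ih hmul)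

lemma IsStandardParabolic.isLongest_of_length_le (hP : IsStandardParabolic cs P) {w : W}
    (hw : w ∈ P) (hmax : ∀ u ∈ P, cs.length u ≤ cs.length w) : IsLongest cs P w := fun _ =>
  ⟨fun h => ⟨h.1, hP.mem_of_isLeftInversion hw h⟩, fun ⟨ht, htP⟩ =>
    ⟨ht, (hmax _ (mul_mem htP hw)).lt_of_ne (ht.length_mul_right_ne w)⟩⟩

lemma IsLongest.mem {w : W} (hw : IsLongest cs P w) : w ∈ P :=
  (Subgroup.closure_le P).2 Set.inter_subset_left
    (mem_closure_of_forall_isLeftInversion_mem cs fun _ ht => ((hw _).1 ht).2)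

lemma IsLongest.mul_self {w : W} (hw : IsLongest cs P w) : w * w = 1 :=
  eq_of_forall_isLeftInversion_iff cs fun t => by
    rw [isLeftInversion_mul_iff, hw, hw, isReflection_conj_iff', conj_mem_iff hw.mem]
    simp only [xor_self, not_isLeftInversion_one]

lemma IsLongest.isLeftInversion_mul {Q : Subgroup W} {wQ wP : W} (hwQ : IsLongest cs Q wQ)
    (hwP : IsLongest cs P wP) (hQP : Q ≤ P) {t : W} :
    cs.IsLeftInversion (wQ * wP) t ↔ cs.IsReflection t ∧ t ∈ P ∧ t ∉ Q := by
  rw [isLeftInversion_mul_iff, hwQ, hwP, isReflection_conj_iff', conj_mem_iff (hQP hwQ.mem),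
    xor_iff_not_iff]
  have := @hQP t
  tauto

lemma IsLongest.isLeftMinimal_mul {w d : W} (hw : IsLongest cs P w) (hd : IsLeftMaximal cs P d) :
    IsLeftMinimal cs P (w * d) := fun t ht h => by
  have hmem : w⁻¹ * t * w ∈ P := (conj_mem_iff hw.mem t).2 ht
  have hrefl : cs.IsReflection (w⁻¹ * t * w) := (isReflection_conj_iff' cs w t).2 h.1
  have hwt : cs.IsLeftInversion w t := (hw t).2 ⟨h.1, ht⟩
  rw [isLeftInversion_mul_iff, xor_iff_not_iff] at h
  exact h (iff_of_true hwt (hd _ hmem hrefl))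

lemma IsLongest.isLeftMaximal_mul {w y : W} (hw : IsLongest cs P w)
    (hlen : cs.length (w * y) = cs.length w + cs.length y) : IsLeftMaximal cs P (w * y) :=
  fun t ht hrefl => ⟨hrefl, by
    calc cs.length (t * (w * y)) ≤ cs.length (t * w) + cs.length y := by
          rw [← mul_assoc]; exact cs.length_mul_le _ _
      _ < cs.length (w * y) := by
          rw [hlen]; exact Nat.add_lt_add_right ((hw t).2 ⟨hrefl, ht⟩).2 _⟩

lemma IsLeftMinimal.isLeftInversion_mul {b v t : W} (hb : IsLeftMinimal cs P b) (ht : t ∈ P) :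
    cs.IsLeftInversion (b * v) t ↔ cs.IsLeftInversion v (b⁻¹ * t * b) := by
  simp only [isLeftInversion_mul_iff, hb t ht, xor_false, id_eq]

lemma IsStandardParabolic.mem_closure_interConj (hP : IsStandardParabolic cs P) {p x b v : W}
    (hp : p ∈ P) (hv : v ∈ P) (hx : IsLeftMinimal cs P x) (hb : IsLeftMinimal cs P b)
    (h : p * x = b * v) :
    p ∈ Subgroup.closure ((interConj P b : Set W) ∩ Set.range cs.simple) := by
  refine mem_closure_of_forall_isLeftInversion_mem cs fun t ht => ?_
  have htP := hP.mem_of_isLeftInversion hp ht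
  have hpx : cs.IsLeftInversion (p * x) t :=
    (isLeftInversion_mul_iff cs).2 (Or.inl ⟨ht, hx _ ((conj_mem_iff hp t).2 htP)⟩)
  rw [h, hb.isLeftInversion_mul htP] at hpx
  exact mem_interConj.2 ⟨htP, hP.mem_of_isLeftInversion hv hpx⟩

lemma IsStandardParabolic.closure_interConj (hP : IsStandardParabolic cs P) {b : W}
    (hb : IsLeftMinimal cs P b) :
    Subgroup.closure ((interConj P b : Set W) ∩ Set.range cs.simple) = interConj P b := by
  refine le_antisymm ((Subgroup.closure_le _).2 Set.inter_subset_left) fun p hp => ?_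
  obtain ⟨hpP, hpb⟩ := mem_interConj.1 hp
  exact hP.mem_closure_interConj hpP hpb hb hb (by group)

lemma IsStandardParabolic.exists_eq_mul (hP : IsStandardParabolic cs P) {b x u v : W}
    (hb : IsLeftMinimal cs P b) (hx : IsLeftMinimal cs P x) (hu : u ∈ P) (hv : v ∈ P)
    (h : x = u * b * v) : ∃ v' ∈ P, x = b * v' := by
  have hmem := hP.mem_closure_interConj (inv_mem hu) hv hx hb (by rw [h]; group)
  rw [hP.closure_interConj hb] at hmem
  have hconj : b⁻¹ * u * b ∈ P := by simpa [mul_assoc] using inv_mem (mem_interConj.1 hmem).2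
  exact ⟨b⁻¹ * u * b * v, mul_mem hconj hv, by rw [h]; group⟩

lemma IsLeftMinimal.conj_simple_mem_range {c : W} (hc : IsLeftMinimal cs P c)
    (hP : IsStandardParabolic cs P) {i : B} (hi : c * cs.simple i * c⁻¹ ∈ P) :
    c * cs.simple i * c⁻¹ ∈ Set.range cs.simple := by
  have hr := (cs.isReflection_simple i).conj c
  obtain ⟨j, hj⟩ := exists_isLeftInversion_simple cs (w := c * cs.simple i * c⁻¹) fun h1 => by
    simpa [h1] using hr.odd_length
  have hjP := hP.mem_of_isLeftInversion hi hj
  have hrc : cs.IsLeftInversion (c * cs.simple i * c⁻¹ * c) (cs.simple j) :=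
    (isLeftInversion_mul_iff cs).2 (Or.inl ⟨hj, hc _ ((conj_mem_iff hi _).2 hjP)⟩)
  rw [inv_mul_cancel_right, hc.isLeftInversion_mul hjP, isLeftInversion_simple_iff] at hrc
  exact ⟨j, by rw [← hrc]; group⟩

lemma IsStandardParabolic.eq_mul_of_isLeftMaximal (hP : IsStandardParabolic cs P)
    {b d u v wP wH : W} (hb : IsLeftMinimal cs P b) (hb' : IsLeftMinimal cs P b⁻¹)
    (hd : IsLeftMaximal cs P d) (hd' : IsLeftMaximal cs P d⁻¹) (hu : u ∈ P) (hv : v ∈ P)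
    (h : d = u * b * v) (hwP : IsLongest cs P wP) (hwH : IsLongest cs (interConj P b) wH) :
    d = wP * wH * b * wP := by
  obtain ⟨v', hv', hx⟩ := hP.exists_eq_mul hb' (hwP.isLeftMinimal_mul hd')
    (mul_mem hwP.mem (inv_mem hv)) (inv_mem hu) (by rw [h]; group)
  have hcross : b * wP = v' * d := calc
    b * wP = b * (wP * d⁻¹) * d := by group
    _ = v' * d := by rw [hx]; group
  have hv'_eq : v' = wH * wP := eq_of_forall_isLeftInversion_iff cs fun t => by
    rw [hwH.isLeftInversion_mul hwP inf_le_left, mem_interConj]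
    by_cases htP : t ∈ P
    · have hconj : v'⁻¹ * t * v' ∈ P := (conj_mem_iff hv' t).2 htP
      have hd_iff : cs.IsLeftInversion d (v'⁻¹ * t * v') ↔ cs.IsReflection t :=
        ⟨fun ht => (isReflection_conj_iff' cs v' t).1 ht.1,
          fun ht => hd _ hconj ((isReflection_conj_iff' cs v' t).2 ht)⟩
      have hmul := isLeftInversion_mul_iff cs (x := v') (y := d) (t := t)
      rw [← hcross, hb.isLeftInversion_mul htP, hwP, isReflection_conj_iff', hd_iff,
        xor_iff_not_iff] at hmul
      have hrefl : cs.IsLeftInversion v' t → cs.IsReflection t := And.left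
      tauto
    · exact iff_of_false (fun ht => htP (hP.mem_of_isLeftInversion hv' ht)) fun ht => htP ht.2.1
  calc d = v'⁻¹ * (b * wP) := by rw [hcross]; group
    _ = wP * wH * b * wP := by
      rw [hv'_eq, mul_inv_rev, inv_eq_of_mul_eq_one_left hwP.mul_self,
        inv_eq_of_mul_eq_one_left hwH.mul_self]
      group

end Inversions

section DiagramAutomorphisms

variable {cs : CoxeterSystem M W} {a : MulAut W}

lemma IsDiagAut.inv (ha : IsDiagAut cs a) : IsDiagAut cs a⁻¹ := by
  have himage := congrArg (⇑a⁻¹ '' ·) ha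
  simpa [IsDiagAut, Set.image_image] using himage.symm

lemma IsDiagAut.length_map_le (ha : IsDiagAut cs a) (w : W) : cs.length (a w) ≤ cs.length w := by
  obtain ⟨ω, hω, rfl⟩ := cs.exists_isReduced w
  rw [hω.eq]
  clear hω
  induction ω with
  | nil => simp
  | cons i ω ih =>
    obtain ⟨j, hj⟩ := ha.subset (Set.mem_image_of_mem a ⟨i, rfl⟩)
    calc cs.length (a (cs.wordProd (i :: ω)))
        = cs.length (cs.simple j * a (cs.wordProd ω)) := by rw [cs.wordProd_cons, map_mul, hj]
      _ ≤ cs.length (cs.simple j) + cs.length (a (cs.wordProd ω)) := cs.length_mul_le _ _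
      _ ≤ (i :: ω).length := by rw [cs.length_simple, List.length_cons]; omega

lemma IsDiagAut.length_map (ha : IsDiagAut cs a) (w : W) : cs.length (a w) = cs.length w :=
  (ha.length_map_le w).antisymm (by simpa using ha.inv.length_map_le (a w))

lemma IsDiagAut.isReflection_map (ha : IsDiagAut cs a) {t : W} (ht : cs.IsReflection t) :
    cs.IsReflection (a t) := by
  obtain ⟨w, i, rfl⟩ := ht
  obtain ⟨j, hj⟩ := ha.subset (Set.mem_image_of_mem a ⟨i, rfl⟩)
  exact ⟨a w, j, by rw [hj, map_mul, map_mul, map_inv]⟩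

lemma IsDiagAut.isReflection_map_iff (ha : IsDiagAut cs a) {t : W} :
    cs.IsReflection (a t) ↔ cs.IsReflection t :=
  ⟨fun ht => by simpa using ha.inv.isReflection_map ht, ha.isReflection_map⟩

lemma IsDiagAut.isLeftInversion_map_iff (ha : IsDiagAut cs a) {w t : W} :
    cs.IsLeftInversion (a w) (a t) ↔ cs.IsLeftInversion w t := by
  rw [CoxeterSystem.IsLeftInversion, CoxeterSystem.IsLeftInversion, ha.isReflection_map_iff,
    ← map_mul, ha.length_map, ha.length_map]

lemma IsLongest.map {P : Subgroup W} {w : W} (hw : IsLongest cs P w) (ha : IsDiagAut cs a) :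
    IsLongest cs (P.map a.toMonoidHom) (a w) := fun t => by
  obtain ⟨t, rfl⟩ := a.surjective t
  rw [ha.isLeftInversion_map_iff, hw, ha.isReflection_map_iff, Subgroup.mem_map_equiv,
    MulEquiv.symm_apply_apply]

lemma IsLeftMaximal.map {P : Subgroup W} {d : W} (hd : IsLeftMaximal cs P d)
    (ha : IsDiagAut cs a) : IsLeftMaximal cs (P.map a.toMonoidHom) (a d) := by
  rintro _ ⟨t, ht, rfl⟩ hrefl
  exact ha.isLeftInversion_map_iff.2 (hd t ht (ha.isReflection_map_iff.1 hrefl))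

end DiagramAutomorphisms

section LinearAlgebra

open Module Module.End

variable {k V V' : Type*} [Field k] [AddCommGroup V] [Module k V] [AddCommGroup V'] [Module k V']

lemma eigenspace_neg_neg (f : End k V) (μ : k) : eigenspace (-f) (-μ) = eigenspace f μ := by
  ext x
  simp

lemma finrank_eigenspace_one_one : finrank k (eigenspace (1 : End k V) 1) = finrank k V := by
  rw [eigenspace_def, one_smul, sub_self, LinearMap.ker_zero, finrank_top]

lemma finrank_eigenspace_conj (e : V ≃ₗ[k] V') (f : End k V) (μ : k) :
    finrank k (eigenspace (e.conj f) μ) = finrank k (eigenspace f μ) := by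
  have hmap : eigenspace (e.conj f) μ = (eigenspace f μ).map (e : V →ₗ[k] V') := by
    ext y
    obtain ⟨x, rfl⟩ := e.surjective y
    simp [LinearEquiv.conj_apply, ← map_smul]
  rw [hmap, LinearEquiv.finrank_map_eq]

lemma finrank_eigenspace_representation_conj {G : Type*} [Group G] (ρ : Representation k G V)
    (g x : G) (μ : k) :
    finrank k (eigenspace (ρ (g * x * g⁻¹)) μ) = finrank k (eigenspace (ρ x) μ) := by
  let e : V ≃ₗ[k] V := LinearEquiv.ofLinearMap (ρ g) (ρ g⁻¹)
    (by rw [← End.mul_eq_comp, ← map_mul, mul_inv_cancel, map_one, End.one_eq_id])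
    (by rw [← End.mul_eq_comp, ← map_mul, inv_mul_cancel, map_one, End.one_eq_id])
  have hconj : ρ (g * x * g⁻¹) = e.conj (ρ x) := by
    rw [map_mul, map_mul]
    rfl
  rw [hconj, finrank_eigenspace_conj]

lemma sub_apply_mem_of_mem_closure {G : Type*} [Group G] (ρ : Representation k G V)
    {R : Submodule k V} {X : Set G} (hX : ∀ s ∈ X, ∀ v, v - ρ s v ∈ R) {g : G}
    (hg : g ∈ Subgroup.closure X) (v : V) : v - ρ g v ∈ R := by
  induction hg using Subgroup.closure_induction generalizing v with
  | mem s hs => exact hX s hs v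
  | one => simp
  | mul x y _ _ ihx ihy =>
    simpa using add_mem (ihy v) (ihx (ρ y v))
  | inv x _ ih => simpa using neg_mem (ih (ρ x⁻¹ v))

lemma finrank_add_finrank_eigenspace_one_restrict [FiniteDimensional k V] (h2 : (2 : k) ≠ 0)
    {R : Submodule k V} {g : End k V} {g' : End k R} (hg' : ∀ x, (g' x : V) = g x)
    (hg : g * g = 1) (hR : ∀ x, x - g x ∈ R) :
    finrank k V + finrank k (eigenspace g' 1) = finrank k R + finrank k (eigenspace g 1) := by
  have hinf : (eigenspace g' 1).map R.subtype = R ⊓ eigenspace g 1 := by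
    rw [← Submodule.map_comap_subtype]
    congr 1
    ext x
    rw [Submodule.mem_comap, mem_eigenspace_iff, mem_eigenspace_iff, one_smul, one_smul,
      Submodule.subtype_apply, ← hg', Subtype.ext_iff]
  have hsup : R ⊔ eigenspace g 1 = ⊤ := by
    refine eq_top_iff.2 fun x _ => Submodule.mem_sup.2
      ⟨(2 : k)⁻¹ • (x - g x), R.smul_mem _ (hR x), (2 : k)⁻¹ • (x + g x), ?_, ?_⟩
    · have hgg : g (g x) = x := LinearMap.congr_fun hg x
      rw [mem_eigenspace_iff, one_smul, map_smul, map_add, hgg, add_comm]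
    · rw [← smul_add, sub_add_add_cancel, ← two_smul k x, inv_smul_smul₀ h2]
  have hdim := Submodule.finrank_sup_add_finrank_inf_eq R (eigenspace g 1)
  rwa [hsup, finrank_top, ← hinf, Submodule.finrank_map_subtype_eq] at hdim

end LinearAlgebra

namespace AffineData

variable {cs : CoxeterSystem M W} (D : AffineData cs)

lemma span_range_iota : Submodule.span ℚ (Set.range D.iota) = ⊤ := by
  refine top_unique ((Pi.basisFun ℚ (Fin D.rank)).span_eq.ge.trans (Submodule.span_mono ?_))
  rintro _ ⟨i, rfl⟩
  refine ⟨D.freeIso.symm (Multiplicative.ofAdd (Pi.single i 1)), funext fun j => ?_⟩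
  simp [iota, Pi.single_apply]

lemma rho_iota (w : W) (l : D.Lam) :
    D.rho w (D.iota l) = D.iota ⟨w * l * w⁻¹, D.hLam_normal.conj_mem _ l.2 w⟩ :=
  D.hrho w l

/-- The conjugation action of `W` on `Λ_ℚ`, as a representation. -/
def conjRep : Representation ℚ W (Fin D.rank → ℚ) where
  toFun := D.rho
  map_one' := LinearMap.ext_on_range D.span_range_iota fun l => by
    rw [rho_iota]
    simp
  map_mul' x y := LinearMap.ext_on_range D.span_range_iota fun l => by
    rw [Module.End.mul_apply, rho_iota, rho_iota, rho_iota]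
    congr 2
    group

lemma rho_one : D.rho 1 = 1 := D.conjRep.map_one

lemma rho_mul (x y : W) : D.rho (x * y) = D.rho x * D.rho y := D.conjRep.map_mul x y

lemma sub_rho_apply_mem_Rprime {b g : W} (hg : g ∈ D.WHstar b) (v : Fin D.rank → ℚ) :
    v - D.rho g v ∈ D.Rprime b := by
  refine sub_apply_mem_of_mem_closure D.conjRep (fun s hs v => ?_) hg v
  have hv : v ∈ Submodule.span ℚ (Set.range D.iota) := D.span_range_iota ▸ Submodule.mem_top
  induction hv using Submodule.span_induction with
  | mem _ hl =>
    obtain ⟨l, rfl⟩ := hl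
    exact Submodule.subset_span ⟨l, s, hs, by rw [← rho_iota]; rfl⟩
  | zero => simp
  | add x y _ _ hx hy => simpa [add_sub_add_comm] using add_mem hx hy
  | smul c x _ hx => simpa [← smul_sub] using Submodule.smul_mem _ c hx

lemma isStandardParabolic_WJ : IsStandardParabolic cs D.WJ :=
  ⟨D.Jset, Set.sdiff_subset, rfl⟩

lemma isLongest_wJ : IsLongest cs D.WJ D.wJ :=
  D.isStandardParabolic_WJ.isLongest_of_length_le D.hwJ_mem D.hwJ_max

lemma wJ_inv : D.wJ⁻¹ = D.wJ :=
  inv_eq_of_mul_eq_one_left D.isLongest_wJ.mul_self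

lemma s0_notMem_WJ : D.s0 ∉ D.WJ := by
  intro hs0
  have htop : D.WJ = ⊤ := by
    rw [eq_top_iff, ← cs.subgroup_closure_range_simple, Subgroup.closure_le]
    intro s hs
    by_cases h : s = D.s0
    · exact h ▸ hs0
    · exact Subgroup.subset_closure ⟨hs, h⟩
  have hfin : (D.WJ : Set W).Finite := D.hWJ_fin
  have := D.infW
  exact Set.infinite_univ (by simpa [htop] using hfin)

lemma mem_Jset_iff {s : W} : s ∈ D.Jset ↔ s ∈ D.WJ ∧ s ∈ Set.range cs.simple :=
  ⟨fun h => ⟨Subgroup.subset_closure h, h.1⟩,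
    fun h => ⟨h.2, fun hs => D.s0_notMem_WJ (hs ▸ h.1)⟩⟩

lemma isDiagAut_st : IsDiagAut cs D.st :=
  Set.Subset.antisymm (Set.image_subset_iff.2 D.hst_S)
    fun s hs => ⟨D.st s, D.hst_S s hs, D.hst_inv s⟩

lemma map_st_WJ : D.WJ.map D.st.toMonoidHom = D.WJ := by
  have hle : D.WJ.map D.st.toMonoidHom ≤ D.WJ := by
    rintro _ ⟨u, hu, rfl⟩
    change D.st u ∈ D.WJ
    rw [D.hst_J u hu]
    exact mul_mem (mul_mem D.hwJ_mem hu) D.hwJ_mem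
  exact hle.antisymm fun u hu => ⟨D.st u, hle ⟨u, hu, rfl⟩, D.hst_inv u⟩

lemma map_st_WHstar (b : W) :
    (D.WHstar b).map D.st.toMonoidHom = Subgroup.closure (D.Hset b) := by
  rw [WHstar, MonoidHom.map_closure, Hstar, MulEquiv.toMonoidHom_eq_coe, MonoidHom.coe_coe,
    Set.image_image]
  simp only [D.hst_inv, Set.image_id']

lemma isStandardParabolic_WHstar (b : W) : IsStandardParabolic cs (D.WHstar b) :=
  ⟨D.Hstar b, Set.image_subset_iff.2 fun s hs => D.hst_S s hs.1.1, rfl⟩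

lemma st_mul_wJ {l : W} (hl : l ∈ D.Lam) : D.st (l * D.wJ) = (l * D.wJ)⁻¹ := by
  rw [map_mul, D.hst_Lam l hl, D.hst_J _ D.hwJ_mem, D.isLongest_wJ.mul_self, one_mul, D.wJ_inv,
    mul_inv_rev, mul_inv_rev, mul_inv_rev, D.wJ_inv, mul_assoc, mul_assoc,
    D.isLongest_wJ.mul_self, mul_one]

variable {D} in
lemma IsDominant.isLeftMaximal_inv {mu : W} (hmu : D.IsDominant mu) :
    IsLeftMaximal cs D.WJ (mu * D.wJ)⁻¹ := by
  rw [mul_inv_rev, D.wJ_inv]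
  refine D.isLongest_wJ.isLeftMaximal_mul ?_
  rw [cs.length_inv, add_comm, ← hmu.2, ← cs.length_inv (mu * D.wJ), mul_inv_rev, D.wJ_inv]

variable {D} in
lemma IsDominant.isLeftMaximal {mu : W} (hmu : D.IsDominant mu) :
    IsLeftMaximal cs D.WJ (mu * D.wJ) := by
  have hmap := hmu.isLeftMaximal_inv.map D.isDiagAut_st
  rwa [D.map_st_WJ, ← D.st_mul_wJ hmu.1, D.hst_inv] at hmap

lemma mul_mul_mem_DCoset {x y u v : W} (hy : y ∈ D.DCoset x) (hu : u ∈ D.WJ) (hv : v ∈ D.WJ) :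
    u * y * v ∈ D.DCoset x := by
  obtain ⟨p, hp, q, hq, rfl⟩ := hy
  exact ⟨u * p, mul_mem hu hp, q * v, mul_mem hq hv, by group⟩

lemma isLeftMinimal_of_length_le {x b : W} (hb : b ∈ D.DCoset x)
    (hmin : ∀ y ∈ D.DCoset x, cs.length b ≤ cs.length y) : IsLeftMinimal cs D.WJ b :=
  fun t ht h => h.2.not_ge (by
    simpa using hmin _ (D.mul_mul_mem_DCoset hb ht (one_mem _)))

lemma isLeftMinimal_inv_of_length_le {x b : W} (hb : b ∈ D.DCoset x)
    (hmin : ∀ y ∈ D.DCoset x, cs.length b ≤ cs.length y) : IsLeftMinimal cs D.WJ b⁻¹ :=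
  fun t ht h => h.2.not_ge (by
    rw [cs.length_inv, ← cs.length_inv (t * b⁻¹), mul_inv_rev, inv_inv]
    simpa using hmin _ (D.mul_mul_mem_DCoset hb (one_mem _) (inv_mem ht)))

lemma closure_Hset {b : W} (hb : IsLeftMinimal cs D.WJ b) (hb' : IsLeftMinimal cs D.WJ b⁻¹) :
    Subgroup.closure (D.Hset b) = interConj D.WJ b := by
  rw [← D.isStandardParabolic_WJ.closure_interConj hb]
  congr 1
  ext s
  rw [Set.mem_inter_iff, SetLike.mem_coe, mem_interConj]
  constructor
  · rintro ⟨hs, r, hr, rfl⟩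
    refine ⟨⟨(D.mem_Jset_iff.1 hs).1, ?_⟩, hs.1⟩
    simpa [mul_assoc] using (D.mem_Jset_iff.1 hr).1
  · rintro ⟨⟨hs, hconj⟩, i, rfl⟩
    have hrange :=
      hb'.conj_simple_mem_range D.isStandardParabolic_WJ (i := i) (by simpa using hconj)
    rw [inv_inv] at hrange
    exact ⟨D.mem_Jset_iff.2 ⟨hs, i, rfl⟩, _, D.mem_Jset_iff.2 ⟨hconj, hrange⟩, by group⟩

lemma isLongest_interConj_st {b w : W} (hb : IsLeftMinimal cs D.WJ b)
    (hb' : IsLeftMinimal cs D.WJ b⁻¹) (hw : IsLongest cs (D.WHstar b) w) :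
    IsLongest cs (interConj D.WJ b) (D.st w) := by
  simpa only [D.map_st_WHstar, D.closure_Hset hb hb'] using hw.map D.isDiagAut_st

lemma st_eq_conj {u : W} (hu : D.st u ∈ D.WJ) : D.st u = D.wJ * u * D.wJ⁻¹ := by
  have hconj : u = D.wJ * D.st u * D.wJ := by rw [← D.hst_J _ hu, D.hst_inv]
  conv_rhs => rw [hconj, D.wJ_inv]
  simp only [mul_assoc, D.isLongest_wJ.mul_self, mul_one]
  rw [← mul_assoc, D.isLongest_wJ.mul_self, one_mul]

lemma eq_longest_mul_wJ_mul {mu b wH : W} (hmu : D.IsDominant mu) (hb_mem : b ∈ D.DCoset mu)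
    (hb : IsLeftMinimal cs D.WJ b) (hb' : IsLeftMinimal cs D.WJ b⁻¹)
    (hwH : IsLongest cs (interConj D.WJ b) wH) : b = wH * D.wJ * mu := by
  obtain ⟨u, hu, v, hv, rfl⟩ := hb_mem
  have hd := D.isStandardParabolic_WJ.eq_mul_of_isLeftMaximal hb hb' hmu.isLeftMaximal
    hmu.isLeftMaximal_inv (inv_mem hu) (mul_mem (inv_mem hv) D.hwJ_mem) (by group)
    D.isLongest_wJ hwH
  calc u * mu * v = (D.wJ * wH)⁻¹ * (D.wJ * wH * (u * mu * v) * D.wJ) * D.wJ⁻¹ := by group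
    _ = wH * D.wJ * mu := by
      rw [← hd, mul_inv_rev, D.wJ_inv, inv_eq_of_mul_eq_one_left hwH.mul_self, mul_assoc,
        mul_assoc mu, D.isLongest_wJ.mul_self, mul_one]

lemma pr_mul {l u : W} (hl : l ∈ D.Lam) (hu : u ∈ D.WJ) : D.pr (l * u) = u :=
  (D.hs0_hyper _).unique (D.hpr _) ⟨hu, by rwa [mul_inv_cancel_right]⟩

lemma pr_mul_of_mem_WJ {l u : W} (hl : l ∈ D.Lam) (hu : u ∈ D.WJ) : D.pr (u * l) = u := by
  simpa using D.pr_mul (D.hLam_normal.conj_mem l hl u) hu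

lemma phi_eq_of_pr_eq {w u : W} (h : D.pr w = u * D.wJ) :
    D.phi w = (Module.finrank ℚ (Module.End.eigenspace (D.rho u) 1) : ℤ) -
      Module.finrank ℚ (Module.End.eigenspace (D.rho D.wJ) 1) := by
  rw [phi, eNeg, eNeg, Amap, Amap, eigenspace_neg_neg, eigenspace_neg_neg, one_mul, h, mul_assoc,
    D.isLongest_wJ.mul_self, mul_one]

lemma phiP_self_eq {b w : W} (hw : IsLongest cs (D.WHstar b) w)
    {rho' : W → (D.Rprime b →ₗ[ℚ] D.Rprime b)}
    (hrho' : ∀ u ∈ D.WHstar b, ∀ x : D.Rprime b, (rho' u x : Fin D.rank → ℚ) = D.rho u x) :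
    D.phiP rho' w w = (Module.finrank ℚ (Fin D.rank → ℚ) : ℤ) -
      Module.finrank ℚ (Module.End.eigenspace (D.rho w) 1) := by
  have hone : rho' (w * w) = 1 := LinearMap.ext fun x => Subtype.ext (by
    rw [hrho' _ (mul_mem hw.mem hw.mem), hw.mul_self, D.rho_one]
    rfl)
  have hsq : D.rho w * D.rho w = 1 := by rw [← D.rho_mul, hw.mul_self, D.rho_one]
  have hfix := finrank_add_finrank_eigenspace_one_restrict two_ne_zero (hrho' w hw.mem) hsq
    (D.sub_rho_apply_mem_Rprime hw.mem)
  rw [phiP, eNeg', eNeg', eigenspace_neg_neg, eigenspace_neg_neg, hone,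
    finrank_eigenspace_one_one]
  omega

end AffineData

/-- One has `φ(d) = φ'(w_{H*}) + φ(b)`, where `d = d_μ = μ w_J` and `b`
are the longest and shortest elements of the double coset `W_J μ W_J`. -/
theorem phi_d_eq_phiP_add_phi_b (cs : CoxeterSystem M W) (D : AffineData cs)
    (mu b wHs : W) (hmu : D.IsDominant mu)
    (hb_mem : b ∈ D.DCoset mu)
    (hb_min : ∀ y ∈ D.DCoset mu, cs.length b ≤ cs.length y)
    (hwHs_mem : wHs ∈ D.WHstar b)
    (hwHs_max : ∀ u ∈ D.WHstar b, cs.length u ≤ cs.length wHs)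
    (rho' : W → (↥(D.Rprime b) →ₗ[ℚ] ↥(D.Rprime b)))
    (hrho' : ∀ u ∈ D.WHstar b, ∀ x : ↥(D.Rprime b),
      ((rho' u x : Fin D.rank → ℚ)) = D.rho u (x : Fin D.rank → ℚ)) :
    D.phi (mu * D.wJ) = D.phiP rho' wHs wHs + D.phi b := by
  have hb := D.isLeftMinimal_of_length_le hb_mem hb_min
  have hb' := D.isLeftMinimal_inv_of_length_le hb_mem hb_min
  have hwHs : IsLongest cs (D.WHstar b) wHs :=
    (D.isStandardParabolic_WHstar b).isLongest_of_length_le hwHs_mem hwHs_max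
  have hwH : IsLongest cs (interConj D.WJ b) (D.st wHs) := D.isLongest_interConj_st hb hb' hwHs
  have hwH_mem : D.st wHs ∈ D.WJ := (mem_interConj.1 hwH.mem).1
  have hpr_d : D.pr (mu * D.wJ) = 1 * D.wJ := by rw [D.pr_mul hmu.1 D.hwJ_mem, one_mul]
  have hpr_b : D.pr b = D.st wHs * D.wJ := calc
    D.pr b = D.pr (D.st wHs * D.wJ * mu) :=
      congrArg D.pr (D.eq_longest_mul_wJ_mul hmu hb_mem hb hb' hwH)
    _ = D.st wHs * D.wJ := D.pr_mul_of_mem_WJ hmu.1 (mul_mem hwH_mem D.hwJ_mem)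
  have hfix : Module.finrank ℚ (Module.End.eigenspace (D.rho (D.st wHs)) 1) =
      Module.finrank ℚ (Module.End.eigenspace (D.rho wHs) 1) := by
    rw [D.st_eq_conj hwH_mem]
    exact finrank_eigenspace_representation_conj D.conjRep D.wJ wHs 1
  rw [D.phi_eq_of_pr_eq hpr_d, D.phi_eq_of_pr_eq hpr_b, D.phiP_self_eq hwHs hrho', hfix,
    D.rho_one, finrank_eigenspace_one_one]
  ring

end LY
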